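/- For every Σ-labeled rooted ordered unranked tree T with n ≥ 2 nodes there exists a forest-algebra formula Ψ over Σ that evaluates to T, has exactly n leaves, and whose parse tree has height at most 10·log₂(n). -/

import Mathlib

/-! ### Forests, trees and contexts over an alphabet `σ`.

A forest is an ordered list of labeled unranked trees; a context is a
forest with a single hole at a leaf position. -/

mutual
/-- A `σ`-labeled rooted ordered unranked tree. -/
inductive FTree (σ : Type) : Type
  | node : σ → FForest σ → FTree σ

/-- A `σ`-labeled forest: an ordered (possibly empty) list of trees. -/
inductive FForest (σ : Type) : Type
  | nil : FForest σ
  | cons : FTree σ → FForest σ → FForest σ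
end

/-- Horizontal concatenation of forests (`⊕` on two forests). -/
def FForest.append {σ : Type} : FForest σ → FForest σ → FForest σ
  | .nil, G => G
  | .cons t F, G => .cons t (F.append G)

/-- A `σ`-labeled context: a forest with exactly one hole `□` at a leaf position.
`hole L R` is the context `L ⊕ □ ⊕ R`; `node L a C R` is the context
`L ⊕ a⟨C⟩ ⊕ R` where `a⟨C⟩` is the tree with `a`-labeled root whose
children form the context `C`. -/
inductive FCtx (σ : Type) : Type
  | hole : FForest σ → FForest σ → FCtx σ
  | node : FForest σ → σ → FCtx σ → FForest σ → FCtx σ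

/-- `F ⊕ C` for a forest `F` and a context `C` (the monoidal action ⊕_HV). -/
def FCtx.hvOp {σ : Type} (F : FForest σ) : FCtx σ → FCtx σ
  | .hole L R => .hole (F.append L) R
  | .node L a C R => .node (F.append L) a C R

/-- `C ⊕ F` for a context `C` and a forest `F` (the monoidal action ⊕_VH). -/
def FCtx.vhOp {σ : Type} : FCtx σ → FForest σ → FCtx σ
  | .hole L R, G => .hole L (R.append G)
  | .node L a C R, G => .node L a C (R.append G)

/-- `C ⊙ D` for contexts `C, D`: replace the hole of `C` by `D` (⊙_VV). -/
def FCtx.vvOp {σ : Type} : FCtx σ → FCtx σ → FCtx σ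
  | .hole L R, D => FCtx.hvOp L (FCtx.vhOp D R)
  | .node L a C R, D => .node L a (C.vvOp D) R

/-- `C ⊙ F` for a context `C` and a forest `F`: replace the hole of `C`
by the roots of `F` (⊙_VH). -/
def FCtx.plug {σ : Type} : FCtx σ → FForest σ → FForest σ
  | .hole L R, G => L.append (G.append R)
  | .node L a C R, G => L.append (.cons (.node a (C.plug G)) R)

/-- The empty forest ε. -/
def FForest.eps (σ : Type) : FForest σ := .nil

/-- The context □ consisting solely of the hole. -/
def FCtx.box (σ : Type) : FCtx σ := .hole .nil .nil
/-! ### Forest-algebra formulas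

A forest-algebra formula is a binary parse tree whose inner nodes are
labeled by one of the five forest-algebra operations and whose leaves are
labeled by a symbol `a` (a single-node forest, constructor `fa`) or `a_□`
(the context with a single `a`-labeled root whose only child is the hole,
constructor `ca`).  The two leaf-label types `α` and `β` are kept separate
so that leaves may carry extra decorations. -/

/-- The five forest-algebra operations: `⊕_HH`, `⊕_HV`, `⊕_VH`, `⊙_VV`,
`⊙_VH`. -/
inductive FAOp : Type
  | hh | hv | vh | vv | vhd
deriving DecidableEq

inductive Formula (α β : Type) : Type
  | fa : α → Formula α β
  | ca : β → Formula α β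
  | node : FAOp → Formula α β → Formula α β → Formula α β

namespace Formula

variable {α β : Type}

/-- The height of (the parse tree of) a formula. -/
def height : Formula α β → ℕ
  | fa _ => 1
  | ca _ => 1
  | node _ l r => 1 + max l.height r.height

/-- The number of leaves of a formula. -/
def numLeaves : Formula α β → ℕ
  | fa _ => 1
  | ca _ => 1
  | node _ l r => l.numLeaves + r.numLeaves

/-- `balance(v)`: height of the right subformula minus height of the left
subformula (0 for leaves). -/
def bal : Formula α β → ℤ
  | node _ l r => (r.height : ℤ) - (l.height : ℤ)
  | _ => 0

/-- The absolute balance. -/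
def abal (t : Formula α β) : ℤ := |t.bal|

/-- The sort of a (sub)formula: `true` if it denotes a forest,
`false` if it denotes a context. -/
def sort : Formula α β → Bool
  | fa _ => true
  | ca _ => false
  | node .hh _ _ => true
  | node .vhd _ _ => true
  | node _ _ _ => false

/-- Well-typedness of a formula: the operands of each operation have the
required sorts. -/
def WT : Formula α β → Prop
  | fa _ => True
  | ca _ => True
  | node .hh l r => l.sort = true ∧ r.sort = true ∧ WT l ∧ WT r
  | node .hv l r => l.sort = true ∧ r.sort = false ∧ WT l ∧ WT r
  | node .vh l r => l.sort = false ∧ r.sort = true ∧ WT l ∧ WT r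
  | node .vv l r => l.sort = false ∧ r.sort = false ∧ WT l ∧ WT r
  | node .vhd l r => l.sort = false ∧ r.sort = true ∧ WT l ∧ WT r

/-- `IsSubformula t s`: `t` is the subformula of `s` rooted at some node. -/
inductive IsSubformula : Formula α β → Formula α β → Prop
  | refl (t : Formula α β) : IsSubformula t t
  | left {t l r} {op : FAOp} : IsSubformula t l → IsSubformula t (node op l r)
  | right {t l r} {op : FAOp} : IsSubformula t r → IsSubformula t (node op l r)

/-- The long path `lp(v)` of (the subformula rooted at) `v`, as the list of
subformulas rooted at its nodes: it stops at the first node of balance 0 and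
otherwise continues into the strictly deeper subformula. -/
def lpList : Formula α β → List (Formula α β)
  | node op l r =>
    if l.height = r.height then [node op l r]
    else if l.height < r.height then node op l r :: lpList r
    else node op l r :: lpList l
  | t => [t]

end Formula

mutual
/-- The number of nodes of a tree. -/
def FTree.size {σ : Type} : FTree σ → ℕ
  | .node _ F => 1 + F.size

/-- The number of nodes of a forest. -/
def FForest.size {σ : Type} : FForest σ → ℕ
  | .nil => 0
  | .cons t F => t.size + F.size
end

/-- Evaluation of a forest-algebra formula over `σ` to the forest
(`Sum.inl`) or context (`Sum.inr`) it represents; `none` if the formula is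
not well typed.  A leaf `fa a` denotes the single-node forest labeled `a`,
and a leaf `ca a` denotes the context `a_□` whose `a`-labeled root has the
hole as its only child. -/
def Formula.evalFree {σ : Type} : Formula σ σ → Option (FForest σ ⊕ FCtx σ)
  | .fa a => some (.inl (.cons (.node a .nil) .nil))
  | .ca a => some (.inr (.node .nil a (.hole .nil .nil) .nil))
  | .node op l r =>
    match l.evalFree, r.evalFree, op with
    | some (.inl F1), some (.inl F2), .hh => some (.inl (F1.append F2))
    | some (.inl F), some (.inr C), .hv => some (.inr (FCtx.hvOp F C))
    | some (.inr C), some (.inl F), .vh => some (.inr (FCtx.vhOp C F))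
    | some (.inr C1), some (.inr C2), .vv => some (.inr (C1.vvOp C2))
    | some (.inr C), some (.inl F), .vhd => some (.inl (C.plug F))
    | _, _, _ => none

theorem FForest.append_nil' {σ : Type} (F : FForest σ) : F.append .nil = F := by
  match F with
  | .nil => rfl
  | .cons t F => simp [FForest.append, FForest.append_nil' F]

theorem FForest.append_assoc' {σ : Type} (F G H : FForest σ) :
    (F.append G).append H = F.append (G.append H) := by
  match F with
  | .nil => rfl
  | .cons t F => simp [FForest.append, FForest.append_assoc' F]

theorem FForest.size_append {σ : Type} (F G : FForest σ) :
    (F.append G).size = F.size + G.size := by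
  match F with
  | .nil => simp [FForest.append, FForest.size]
  | .cons t F => simp [FForest.append, FForest.size, FForest.size_append F, add_assoc]

theorem FTree.size_pos' {σ : Type} (t : FTree σ) : 0 < t.size := by
  match t with
  | .node a F => simp [FTree.size]

theorem FForest.eq_nil_of_size {σ : Type} (F : FForest σ) (h : F.size = 0) : F = .nil := by
  match F with
  | .nil => rfl
  | .cons t F =>
    have := t.size_pos'
    simp [FForest.size] at h
    omega

/-- Number of labeled nodes of a context. -/
def FCtx.csize {σ : Type} : FCtx σ → ℕ
  | .hole L R => L.size + R.size
  | .node L _ C R => L.size + 1 + R.size + C.csize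

/-- The hole has no siblings. -/
def FCtx.Good {σ : Type} : FCtx σ → Prop
  | .hole L R => L = .nil ∧ R = .nil
  | .node _ _ C _ => C.Good

theorem FCtx.box_vv {σ : Type} (D : FCtx σ) : (FCtx.box σ).vvOp D = D := by
  cases D <;> simp [FCtx.box, FCtx.vvOp, FCtx.vhOp, FCtx.hvOp, FForest.append,
    FForest.append_nil']

theorem FCtx.vv_box {σ : Type} (D : FCtx σ) : D.vvOp (FCtx.box σ) = D := by
  induction D with
  | hole L R => simp [FCtx.box, FCtx.vvOp, FCtx.vhOp, FCtx.hvOp, FForest.append,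
    FForest.append_nil']
  | node L a C R ih => simp [FCtx.vvOp, ih]

theorem FCtx.box_plug {σ : Type} (G : FForest σ) : (FCtx.box σ).plug G = G := by
  simp [FCtx.box, FCtx.plug, FForest.append, FForest.append_nil']

theorem FCtx.csize_box {σ : Type} : (FCtx.box σ).csize = 0 := by
  simp [FCtx.box, FCtx.csize, FForest.size]

theorem FCtx.csize_plug {σ : Type} (C : FCtx σ) (G : FForest σ) :
    (C.plug G).size = C.csize + G.size := by
  induction C with
  | hole L R => simp [FCtx.plug, FCtx.csize, FForest.size_append]; omega
  | node L a C R ih =>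
    simp [FCtx.plug, FCtx.csize, FForest.size_append, FForest.size, FTree.size, ih]; omega

theorem FCtx.csize_hv {σ : Type} (C : FCtx σ) (G : FForest σ) :
    (FCtx.hvOp G C).csize = C.csize + G.size := by
  cases C <;> simp [FCtx.hvOp, FCtx.csize, FForest.size_append] <;> omega

theorem FCtx.csize_vh {σ : Type} (C : FCtx σ) (G : FForest σ) :
    (FCtx.vhOp C G).csize = C.csize + G.size := by
  cases C <;> simp [FCtx.vhOp, FCtx.csize, FForest.size_append] <;> omega

theorem FCtx.csize_vv {σ : Type} (C D : FCtx σ) :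
    (C.vvOp D).csize = C.csize + D.csize := by
  induction C with
  | hole L R => simp [FCtx.vvOp, FCtx.csize, FCtx.csize_hv, FCtx.csize_vh]; omega
  | node L a C R ih => simp [FCtx.vvOp, FCtx.csize, ih]; omega

/-- `F` is empty or has a formula of height at most `h`. -/
def okF {σ : Type} (F : FForest σ) (h : ℕ) : Prop :=
  F = .nil ∨ ∃ Ψ : Formula σ σ, Ψ.evalFree = some (.inl F) ∧ Ψ.numLeaves = F.size ∧ Ψ.height ≤ h

/-- `C` is the box or has a formula of height at most `h`. -/
def okC {σ : Type} (C : FCtx σ) (h : ℕ) : Prop :=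
  C = .box σ ∨
    ∃ Ψ : Formula σ σ, Ψ.evalFree = some (.inr C) ∧ Ψ.numLeaves = C.csize ∧ Ψ.height ≤ h

theorem okF.mono {σ : Type} {F : FForest σ} {h k : ℕ} (H : okF F h) (hk : h ≤ k) : okF F k := by
  rcases H with H | ⟨Ψ, a, b, c⟩
  · exact .inl H
  · exact .inr ⟨Ψ, a, b, c.trans hk⟩

theorem okC.mono {σ : Type} {F : FCtx σ} {h k : ℕ} (H : okC F h) (hk : h ≤ k) : okC F k := by
  rcases H with H | ⟨Ψ, a, b, c⟩
  · exact .inl H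
  · exact .inr ⟨Ψ, a, b, c.trans hk⟩

theorem okF.append {σ : Type} {F G : FForest σ} {h : ℕ} (H : okF F h) (K : okF G h) :
    okF (F.append G) (h + 1) := by
  rcases H with rfl | ⟨Ψ, a, b, c⟩
  · exact K.mono (by omega)
  rcases K with rfl | ⟨Φ, a', b', c'⟩
  · rw [FForest.append_nil']
    exact .inr ⟨Ψ, a, b, by omega⟩
  · refine .inr ⟨.node .hh Ψ Φ, ?_, ?_, ?_⟩
    · simp [Formula.evalFree, a, a']
    · simp [Formula.numLeaves, b, b', FForest.size_append]
    · simp [Formula.height]; omega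

theorem okF.plug {σ : Type} {C : FCtx σ} {G : FForest σ} {h : ℕ} (H : okC C h) (K : okF G h)
    (hG : G.size ≠ 0) : okF (C.plug G) (h + 1) := by
  rcases H with rfl | ⟨Ψ, a, b, c⟩
  · rw [FCtx.box_plug]
    exact K.mono (by omega)
  rcases K with rfl | ⟨Φ, a', b', c'⟩
  · simp [FForest.size] at hG
  · refine .inr ⟨.node .vhd Ψ Φ, ?_, ?_, ?_⟩
    · simp [Formula.evalFree, a, a']
    · simp [Formula.numLeaves, b, b', FCtx.csize_plug]
    · simp [Formula.height]; omega

theorem okF.tree {σ : Type} {G : FForest σ} {h : ℕ} (x : σ) (K : okF G h) :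
    okF (.cons (.node x G) .nil) (h + 1) := by
  rcases K with rfl | ⟨Φ, a', b', c'⟩
  · exact .inr ⟨.fa x, rfl, rfl, by simp [Formula.height]⟩
  · refine .inr ⟨.node .vhd (.ca x) Φ, ?_, ?_, ?_⟩
    · simp [Formula.evalFree, a', FCtx.plug, FForest.append, FForest.append_nil']
    · simp [Formula.numLeaves, b', FForest.size, FTree.size]
    · have : 1 ≤ Φ.height := by cases Φ <;> simp [Formula.height]
      simp [Formula.height]; omega

theorem okC.vv {σ : Type} {C D : FCtx σ} {h : ℕ} (H : okC C h) (K : okC D h) :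
    okC (C.vvOp D) (h + 1) := by
  rcases H with rfl | ⟨Ψ, a, b, c⟩
  · rw [FCtx.box_vv]
    exact K.mono (by omega)
  rcases K with rfl | ⟨Φ, a', b', c'⟩
  · rw [FCtx.vv_box]
    exact .inr ⟨Ψ, a, b, by omega⟩
  · refine .inr ⟨.node .vv Ψ Φ, ?_, ?_, ?_⟩
    · simp [Formula.evalFree, a, a']
    · simp [Formula.numLeaves, b, b', FCtx.csize_vv]
    · simp [Formula.height]; omega

theorem okC.item {σ : Type} {L R : FForest σ} {h : ℕ} (x : σ) (hh : 1 ≤ h)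
    (H : okF L h) (K : okF R h) :
    okC (.node L x (.box σ) R) (h + 2) := by
  have h1 : ∃ Ψ : Formula σ σ, Ψ.evalFree = some (.inr (.node .nil x (.box σ) R)) ∧
      Ψ.numLeaves = R.size + 1 ∧ Ψ.height ≤ h + 1 := by
    rcases K with rfl | ⟨Φ, a', b', c'⟩
    · exact ⟨.ca x, rfl, rfl, by simp [Formula.height]⟩
    · refine ⟨.node .vh (.ca x) Φ, ?_, ?_, ?_⟩
      · simp [Formula.evalFree, a', FCtx.vhOp, FForest.append, FCtx.box]
      · simp [Formula.numLeaves, b']; omega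
      · simp [Formula.height]; omega
  obtain ⟨Φ, a', b', c'⟩ := h1
  rcases H with rfl | ⟨Ψ, a, b, c⟩
  · refine .inr ⟨Φ, a', ?_, by omega⟩
    rw [b']; simp [FCtx.csize, FForest.size, FCtx.csize_box]; omega
  · refine .inr ⟨.node .hv Ψ Φ, ?_, ?_, ?_⟩
    · simp [Formula.evalFree, a, a', FCtx.hvOp, FForest.append_nil']
    · simp [Formula.numLeaves, b, b', FCtx.csize, FCtx.csize_box]; omega
    · simp [Formula.height]; omega

theorem split_ctx {σ : Type} (C : FCtx σ) (hC : C.Good) (k : ℕ) (hk : k < C.csize) :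
    ∃ C1 C2 : FCtx σ, ∃ L a R, C1.Good ∧ C2.Good ∧
      C = C1.vvOp ((FCtx.node L a (.box σ) R).vvOp C2) ∧
      C1.csize ≤ k ∧ k < C1.csize + (L.size + 1 + R.size) := by
  induction C generalizing k with
  | hole L R =>
    obtain ⟨rfl, rfl⟩ := hC
    simp [FCtx.csize, FForest.size] at hk
  | node L a C R ih =>
    by_cases h : k < L.size + 1 + R.size
    · refine ⟨.box σ, C, L, a, R, ⟨rfl, rfl⟩, hC, ?_, ?_, ?_⟩
      · simp [FCtx.box_vv, FCtx.vvOp]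
      · simp [FCtx.csize_box]
      · simpa [FCtx.csize_box] using h
    · simp only [FCtx.csize] at hk
      obtain ⟨C1, C2, L', a', R', g1, g2, e, s1, s2⟩ :=
        ih hC (k - (L.size + 1 + R.size)) (by omega)
      refine ⟨.node L a C1 R, C2, L', a', R', g1, g2, ?_, ?_, ?_⟩
      · simp only [FCtx.vvOp] at e ⊢
        rw [← e]
      · simp only [FCtx.csize]; omega
      · simp only [FCtx.csize]; omega

theorem split_forest {σ : Type} (F : FForest σ) (k : ℕ) (hk : k < F.size) :
    ∃ L t R, F = FForest.append L (.cons t R) ∧ L.size ≤ k ∧ k < L.size + t.size := by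
  match F with
  | .nil => simp [FForest.size] at hk
  | .cons t F =>
    by_cases h : k < t.size
    · exact ⟨.nil, t, F, rfl, by simp [FForest.size], by simpa [FForest.size] using h⟩
    · simp only [FForest.size] at hk
      obtain ⟨L, t', R, e, s1, s2⟩ := split_forest F (k - t.size) (by omega)
      refine ⟨.cons t L, t', R, ?_, ?_, ?_⟩
      · rw [e]; rfl
      · simp only [FForest.size]; omega
      · simp only [FForest.size]; omega

theorem split_deep {σ : Type} (k n : ℕ) : ∀ (F : FForest σ), F.size = n → k < F.size →
    ∃ (C : FCtx σ) (L : FForest σ) (a : σ) (H R : FForest σ), C.Good ∧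
      F = C.plug (L.append (.cons (.node a H) R)) ∧
      L.size ≤ k ∧ H.size ≤ k ∧ k < L.size + (1 + H.size) := by
  induction n using Nat.strong_induction_on with
  | _ n ih =>
    intro F hn hk
    obtain ⟨L, ⟨a, H⟩, R, e, s1, s2⟩ := split_forest F k hk
    simp only [FTree.size] at s2
    by_cases h : H.size ≤ k
    · exact ⟨.box σ, L, a, H, R, ⟨rfl, rfl⟩, by rw [FCtx.box_plug, e], s1, h, s2⟩
    · have hs : F.size = L.size + (1 + H.size + R.size) := by
        rw [e]; simp [FForest.size_append, FForest.size, FTree.size]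
      obtain ⟨C, L', a', H', R', g, e', t⟩ := ih H.size (by omega) H rfl (by omega)
      refine ⟨.node L a C R, L', a', H', R', g, ?_, t⟩
      simp only [FCtx.plug]
      rw [← e', e]

theorem okF_all {σ : Type} (n : ℕ) :
    (∀ F : FForest σ, F.size = n → okF F (5 * Nat.log 2 n + 1)) ∧
    (∀ C : FCtx σ, C.Good → C.csize = n → okC C (5 * Nat.log 2 n + 5)) := by
  induction n using Nat.strong_induction_on with
  | _ n ih =>
    have hlog : 2 ≤ n → Nat.log 2 n = Nat.log 2 (n / 2) + 1 := fun h =>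
      Nat.log_of_one_lt_of_le (by norm_num) h
    have goodbox : ∀ C : FCtx σ, C.Good → C.csize = 0 → C = .box σ := by
      intro C g h
      cases C with
      | hole L R => obtain ⟨rfl, rfl⟩ := g; rfl
      | node L a C R => simp [FCtx.csize] at h
    have hF : ∀ F : FForest σ, F.size = n → okF F (5 * Nat.log 2 n + 1) := by
      intro F hn
      rcases Nat.eq_zero_or_pos n with h0 | h0
      · exact .inl (F.eq_nil_of_size (by omega))
      obtain ⟨C, L, a, H, R, g, e, s1, s2, s3⟩ := split_deep (n / 2) n F hn (by omega)
      have hs : F.size = C.csize + (L.size + (1 + H.size + R.size)) := by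
        rw [e, FCtx.csize_plug]; simp [FForest.size_append, FForest.size, FTree.size]
      rcases Nat.lt_or_ge n 2 with h1 | h1
      · have hc := goodbox C g (by omega)
        have hl := L.eq_nil_of_size (by omega)
        have hh := H.eq_nil_of_size (by omega)
        have hr := R.eq_nil_of_size (by omega)
        subst hc hl hh hr
        rw [e, FCtx.box_plug]
        exact (okF.tree (h := 0) a (.inl rfl)).mono (by omega)
      · have small : ∀ G : FForest σ, G.size ≤ n / 2 → okF G (5 * Nat.log 2 (n / 2) + 1) := by
          intro G hG
          have := Nat.log_mono_right (b := 2) hG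
          exact ((ih G.size (by omega)).1 G rfl).mono (by omega)
        have hC : okC C (5 * Nat.log 2 (n / 2) + 5) := by
          have hG : C.csize ≤ n / 2 := by omega
          have := Nat.log_mono_right (b := 2) hG
          exact ((ih C.csize (by omega)).2 C g rfl).mono (by omega)
        have h3 : okF (FForest.cons (.node a H) R) (5 * Nat.log 2 (n / 2) + 1 + 1 + 1) :=
          (okF.tree a (small H s2)).append ((small R (by omega)).mono (by omega))
        have h4 := (((small L s1).mono (by omega)).append h3).mono
          (show _ ≤ 5 * Nat.log 2 (n / 2) + 5 by omega)
        rw [e, hlog h1]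
        exact okF.plug hC h4 (by simp [FForest.size_append, FForest.size, FTree.size])
    refine ⟨hF, ?_⟩
    intro C g hn
    rcases Nat.eq_zero_or_pos n with h0 | h0
    · exact .inl (goodbox C g (by omega))
    obtain ⟨C1, C2, L, a, R, g1, g2, e, s1, s2⟩ := split_ctx C g (n / 2) (by omega)
    have hs : C.csize = C1.csize + ((L.size + 1 + R.size) + C2.csize) := by
      rw [e]; simp [FCtx.csize_vv, FCtx.csize, FCtx.csize_box]
    have small : ∀ D : FCtx σ, D.Good → D.csize ≤ n / 2 → okC D (5 * Nat.log 2 n) := by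
      intro D hD hs
      rcases Nat.lt_or_ge n 2 with h1 | h1
      · exact .inl (goodbox D hD (by omega))
      · have := Nat.log_mono_right (b := 2) hs
        have := hlog h1
        exact ((ih D.csize (by omega)).2 D hD rfl).mono (by omega)
    have fs : ∀ G : FForest σ, G.size < n → okF G (5 * Nat.log 2 n + 1) := by
      intro G hG
      have := Nat.log_mono_right (b := 2) hG.le
      exact ((ih G.size hG).1 G rfl).mono (by omega)
    have h1 := okC.item a (by omega) (fs L (by omega)) (fs R (by omega))
    have h2 := h1.vv ((small C2 g2 (by omega)).mono (by omega))
    rw [e]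
    exact (okC.vv ((small C1 g1 s1).mono (by omega)) h2).mono (by omega)

/-- For every `σ`-labeled rooted ordered unranked tree `T`
with `n ≥ 2` nodes there exists a forest-algebra formula `Ψ` over `σ` that
evaluates to `T`, has exactly `n` leaves, and whose parse tree has height at
most `10·log₂ n`. -/
theorem exists_balanced_formula {σ : Type} [Fintype σ]
    (T : FTree σ) (h2 : 2 ≤ T.size) :
    ∃ Ψ : Formula σ σ,
      Ψ.evalFree = some (.inl (.cons T .nil)) ∧
      Ψ.numLeaves = T.size ∧
      (Ψ.height : ℝ) ≤ 10 * Real.logb 2 (T.size : ℝ) := by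
  have hs : (FForest.cons T .nil).size = T.size := by simp [FForest.size]
  rcases (okF_all T.size).1 (.cons T .nil) hs with h | ⟨Ψ, a, b, c⟩
  · cases h
  · refine ⟨Ψ, a, b.trans hs, ?_⟩
    have h1 : (Nat.log 2 T.size : ℝ) ≤ Real.logb 2 (T.size : ℝ) := by
      exact_mod_cast Real.natLog_le_logb T.size 2
    have h3 : (1 : ℝ) ≤ Nat.log 2 T.size := by
      exact_mod_cast Nat.log_pos (by norm_num) h2
    have h4 : (Ψ.height : ℝ) ≤ 5 * Nat.log 2 T.size + 1 := by exact_mod_cast c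
    linarith
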